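/- Let n ≥ 3, δ := e^{−3}, f(x) := χ_{B_β(0,δ)}(x) / ( |x|_β² · |log |x|_β|⁶ ), and η_β(r) := sup_{x∈ℝⁿ} ∫_{{y : |x−y|_β < r}} f(y) / |x−y|_β^{n−2} dy. Then there exists a constant C = C(n,β) > 0 such that for every r ∈ (0, δ), ∫₀^r η_β(ρ)^{1/4} / ρ dρ ≤ C · (−log r)^{−1/4}; in particular ∫₀^r ρ^{−1} η_β(ρ)^{1/4} dρ < +∞. -/

import Mathlib

open MeasureTheory Real Set Filter Topology

/-- The non-isotropic β-distance of `x` to the origin: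
`|x|_β = (∑ k, |x k| ^ (1/β k)) ^ ((β₁+⋯+βₙ)/n)`. -/
noncomputable def betaDist (n : ℕ) (β : Fin n → ℝ) (x : Fin n → ℝ) : ℝ :=
  (∑ k, |x k| ^ (1 / β k)) ^ ((∑ k, β k) / n)

/-- The example function `f(x) = χ_{B_β(0,e⁻³)}(x) / (|x|_β² |log |x|_β|⁶)`. -/
noncomputable def fex (n : ℕ) (β : Fin n → ℝ) (x : Fin n → ℝ) : ℝ :=
  Set.indicator {z : Fin n → ℝ | betaDist n β z < Real.exp (-3)}
    (fun z => 1 / (betaDist n β z ^ (2:ℝ) * |Real.log (betaDist n β z)| ^ (6:ℝ))) x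

/-- The Stummel modulus (with `p = 2`-type kernel `|x-y|_β^{n-2}`) of `fex`:
`η_β(r) = sup_x ∫_{|x-y|_β<r} fex(y)/|x-y|_β^{n-2} dy`. -/
noncomputable def etaEx (n : ℕ) (β : Fin n → ℝ) (r : ℝ) : ℝ :=
  ⨆ x : Fin n → ℝ, ∫ y in {y : Fin n → ℝ | betaDist n β (x - y) < r},
    fex n β y / betaDist n β (x - y) ^ ((n:ℝ) - 2)

/-!
Write `N = |·|_β` and `h(t) = t⁻ⁿ |log t|⁻⁶`. Both `t ↦ t⁻² |log t|⁻⁶`, on `(0, e⁻³]`, and the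
kernel are decreasing, so the Stummel integrand at `y` is at most `h(min (N(x - y)) (N y))`,
hence at most `h(N(x - y)) + h(N y)`, and only radii below `ρ` occur. By translation invariance
both terms integrate to at most `∫_{N < ρ} h(N)`, uniformly in `x`. Since `N`-balls satisfy
`|{N < s}| ≲ sⁿ` and `h` is decreasing, Tonelli bounds this by a multiple of
`∫₀^ρ h(t) tⁿ⁻¹ dt = (-log ρ)⁻⁵ / 5`. The fourth root of this, `(-log ρ)^{-5/4}`, is integrable
against `dρ/ρ` with the stated bound.
-/

open scoped ENNReal NNReal

section LogIntegral

lemma neg_log_pos_of_mem_Ioc {r t : ℝ} (hr : r < 1) (ht : t ∈ Ioc 0 r) : 0 < -log t :=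
  neg_pos.2 (log_neg ht.1 (ht.2.trans_lt hr))

lemma hasDerivAt_neg_log_rpow_div {p t : ℝ} (hp : 1 < p) (ht : 0 < t) (ht1 : t < 1) :
    HasDerivAt (fun t => (-log t) ^ (1 - p) / (p - 1)) (t⁻¹ * (-log t) ^ (-p)) t := by
  have hp' : p - 1 ≠ 0 := by linarith
  have h := ((hasDerivAt_log ht.ne').fun_neg.rpow_const (p := 1 - p)
    (Or.inl (neg_pos.2 (log_neg ht ht1)).ne')).div_const (p - 1)
  refine h.congr_deriv ?_
  rw [sub_sub_cancel_left]
  field_simp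
  ring

-- At the endpoint `0` this relies on the conventions `log 0 = 0` and `0 ^ (1 - p) = 0`.
lemma continuousOn_neg_log_rpow {p r : ℝ} (hp : 1 < p) (hr : r < 1) :
    ContinuousOn (fun t => (-log t) ^ (1 - p)) (Icc 0 r) := by
  intro t ht
  refine ContinuousAt.continuousWithinAt ?_
  rcases ht.1.eq_or_lt with rfl | ht0
  · have h0 : (-log 0) ^ (1 - p) = 0 := by
      rw [log_zero, neg_zero, zero_rpow (by linarith)]
    rw [continuousAt_iff_punctured_nhds, h0, ← neg_sub]
    exact (tendsto_rpow_neg_atTop (sub_pos.2 hp)).comp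
      (tendsto_neg_atBot_atTop.comp tendsto_log_nhdsNE_zero)
  · exact (continuousAt_log ht0.ne').neg.rpow_const
      (Or.inl (neg_log_pos_of_mem_Ioc hr ⟨ht0, ht.2⟩).ne')

lemma inv_mul_neg_log_rpow_nonneg {p r t : ℝ} (hr : r < 1) (ht : t ∈ Ioc 0 r) :
    0 ≤ t⁻¹ * (-log t) ^ (-p) :=
  mul_nonneg (inv_nonneg.2 ht.1.le) (rpow_nonneg (neg_log_pos_of_mem_Ioc hr ht).le _)

lemma integrableOn_inv_mul_neg_log_rpow {p r : ℝ} (hp : 1 < p) (hr : r < 1) :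
    IntegrableOn (fun t => t⁻¹ * (-log t) ^ (-p)) (Ioc 0 r) :=
  intervalIntegral.integrableOn_deriv_of_nonneg
    ((continuousOn_neg_log_rpow hp hr).div_const (p - 1))
    (fun _ ht => hasDerivAt_neg_log_rpow_div hp ht.1 (ht.2.trans hr))
    (fun _ ht => inv_mul_neg_log_rpow_nonneg hr (Ioo_subset_Ioc_self ht))

lemma setIntegral_inv_mul_neg_log_rpow {p r : ℝ} (hp : 1 < p) (hr0 : 0 ≤ r) (hr : r < 1) :
    ∫ t in Ioc 0 r, t⁻¹ * (-log t) ^ (-p) = (-log r) ^ (1 - p) / (p - 1) := by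
  rw [← intervalIntegral.integral_of_le hr0,
    intervalIntegral.integral_eq_sub_of_hasDerivAt_of_le hr0
      ((continuousOn_neg_log_rpow hp hr).div_const (p - 1))
      (fun t ht => hasDerivAt_neg_log_rpow_div hp ht.1 (ht.2.trans hr))
      ((intervalIntegrable_iff_integrableOn_Ioc_of_le hr0).2
        (integrableOn_inv_mul_neg_log_rpow hp hr)),
    log_zero, neg_zero, zero_rpow (by linarith), zero_div, sub_zero]

lemma setLIntegral_inv_mul_neg_log_rpow {p r : ℝ} (hp : 1 < p) (hr0 : 0 ≤ r) (hr : r < 1) :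
    ∫⁻ t in Ioc 0 r, ENNReal.ofReal (t⁻¹ * (-log t) ^ (-p)) =
      ENNReal.ofReal ((-log r) ^ (1 - p) / (p - 1)) := by
  rw [← setIntegral_inv_mul_neg_log_rpow hp hr0 hr,
    ofReal_integral_eq_lintegral_ofReal (integrableOn_inv_mul_neg_log_rpow hp hr)
      (ae_restrict_of_forall_mem measurableSet_Ioc
        fun t ht => inv_mul_neg_log_rpow_nonneg hr ht)]

theorem integral_rpow_div_le_of_le_neg_log_rpow {η : ℝ → ℝ} {A b θ r : ℝ} (hA : 0 ≤ A)
    (hθ : 0 ≤ θ) (hbθ : 1 < b * θ) (hr0 : 0 ≤ r) (hr : r < 1)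
    (hη_meas : AEMeasurable η (volume.restrict (Ioc 0 r))) (hη : ∀ t ∈ Ioc 0 r, 0 ≤ η t)
    (hη_le : ∀ t ∈ Ioc 0 r, η t ≤ A * (-log t) ^ (-b)) :
    IntegrableOn (fun t => η t ^ θ / t) (Ioc 0 r) ∧
      ∫ t in Ioc 0 r, η t ^ θ / t ≤ A ^ θ / (b * θ - 1) * (-log r) ^ (1 - b * θ) := by
  have h_bound : ∀ t ∈ Ioc 0 r, η t ^ θ / t ≤ A ^ θ * (t⁻¹ * (-log t) ^ (-(b * θ))) := by
    intro t ht
    have hlog := (neg_log_pos_of_mem_Ioc hr ht).le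
    have ht0 := ht.1
    calc η t ^ θ / t ≤ (A * (-log t) ^ (-b)) ^ θ / t := by
          gcongr
          exacts [hη t ht, hη_le t ht]
      _ = A ^ θ * (t⁻¹ * (-log t) ^ (-(b * θ))) := by
          rw [mul_rpow hA (rpow_nonneg hlog _), ← rpow_mul hlog, neg_mul]
          ring
  have h_dom := (integrableOn_inv_mul_neg_log_rpow hbθ hr).const_mul (A ^ θ)
  have h_int : IntegrableOn (fun t => η t ^ θ / t) (Ioc 0 r) := by
    refine h_dom.mono' ((hη_meas.pow_const θ).div aemeasurable_id).aestronglyMeasurable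
      (ae_restrict_of_forall_mem measurableSet_Ioc fun t ht => ?_)
    rw [norm_of_nonneg (div_nonneg (rpow_nonneg (hη t ht) θ) ht.1.le)]
    exact h_bound t ht
  refine ⟨h_int, (setIntegral_mono_on h_int h_dom measurableSet_Ioc h_bound).trans_eq ?_⟩
  rw [integral_const_mul, setIntegral_inv_mul_neg_log_rpow hbθ hr0 hr]
  ring

end LogIntegral

section LogPole

/-- The radial profile `t ↦ 1 / (t ^ s * |log t| ^ p)`: a pole of order `s` at `0`, tempered by a
logarithm of power `p`. The function `fex` has `s = 2`, `p = 6`. -/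
noncomputable def logPole (s p t : ℝ) : ℝ :=
  1 / (t ^ s * |log t| ^ p)

lemma logPole_nonneg (s p : ℝ) {t : ℝ} (ht : 0 ≤ t) : 0 ≤ logPole s p t := by
  unfold logPole
  positivity

lemma measurable_logPole (s p : ℝ) : Measurable (logPole s p) := by
  unfold logPole
  fun_prop

lemma logPole_div_rpow (a d p : ℝ) {t : ℝ} (ht : 0 < t) :
    logPole a p t / t ^ (d - a) = logPole d p t := by
  rw [logPole, logPole, div_div, mul_right_comm, ← rpow_add ht, add_sub_cancel]

lemma logPole_eq_rpow_neg {s p t : ℝ} (hp : 0 < p) (ht : 0 < t) (ht1 : t ≤ 1) :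
    logPole s p t = (log t⁻¹ / t⁻¹ ^ (s / p)) ^ (-p) := by
  have hlog : 0 ≤ -log t := neg_nonneg.2 (log_nonpos ht.le ht1)
  rw [log_inv, inv_rpow ht.le, div_inv_eq_mul, rpow_neg (by positivity), mul_rpow hlog
    (by positivity), ← rpow_mul ht.le, div_mul_cancel₀ _ hp.ne', logPole,
    abs_of_nonpos (neg_nonneg.1 hlog), one_div, mul_comm]

lemma antitoneOn_logPole {s p : ℝ} (hs : 0 < s) (hp : 0 < p) :
    AntitoneOn (logPole s p) (Ioc 0 (exp (-(p / s)))) := by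
  intro t ht u hu htu
  have hsp : 0 < s / p := div_pos hs hp
  have h_lt : exp (-(p / s)) < 1 := exp_lt_one_iff.2 (neg_neg_of_pos (div_pos hp hs))
  have h_inv : ∀ v ∈ Ioc 0 (exp (-(p / s))), exp (s / p)⁻¹ ≤ v⁻¹ := fun v hv => by
    rw [inv_div, ← inv_le_inv₀ (by simpa using hv.1) (exp_pos _), inv_inv, ← exp_neg]
    exact hv.2
  rw [logPole_eq_rpow_neg hp ht.1 (ht.2.trans h_lt.le),
    logPole_eq_rpow_neg hp hu.1 (hu.2.trans h_lt.le)]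
  refine rpow_le_rpow_of_nonpos (div_pos ?_ (rpow_pos_of_pos (inv_pos.2 ht.1) _))
    (log_div_self_rpow_antitoneOn hsp (h_inv u hu) (h_inv t ht) (inv_anti₀ ht.1 htu))
    (neg_nonpos.2 hp.le)
  exact log_pos (one_lt_inv₀ ht.1 |>.2 (ht.2.trans_lt h_lt))

-- Passing to the smaller of the two radii decouples the two variables of the Stummel integrand.
lemma logPole_div_rpow_le_logPole_min {a d p u v : ℝ} (ha : 0 < a) (had : a ≤ d) (hp : 0 < p)
    (hu : 0 < u) (hv : v ∈ Ioc 0 (exp (-(p / a)))) :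
    logPole a p v / u ^ (d - a) ≤ logPole d p (min u v) := by
  have hm : 0 < min u v := lt_min hu hv.1
  calc logPole a p v / u ^ (d - a) ≤ logPole a p (min u v) / min u v ^ (d - a) := by
        gcongr
        · exact logPole_nonneg a p hm.le
        · exact antitoneOn_logPole ha hp ⟨hm, (min_le_right u v).trans hv.2⟩ hv (min_le_right u v)
        · exact min_le_left u v
    _ = logPole d p (min u v) := logPole_div_rpow a d p hm

end LogPole

section RadialIntegral

lemma le_two_mul_setLIntegral_div_of_antitoneOn {h : ℝ → ℝ≥0∞} {ρ u : ℝ}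
    (h_anti : AntitoneOn h (Ioo 0 ρ)) (hu : u ∈ Ioo 0 ρ) :
    h u ≤ 2 * ∫⁻ t in Ioo (u / 2) u, h t / ENNReal.ofReal t := by
  have hu0 : ENNReal.ofReal u ≠ 0 := (ENNReal.ofReal_pos.2 hu.1).ne'
  calc h u = 2 * ∫⁻ _ in Ioo (u / 2) u, h u / ENNReal.ofReal u := by
        rw [setLIntegral_const, volume_Ioo, sub_half, ENNReal.ofReal_div_of_pos two_pos,
          ENNReal.ofReal_ofNat, ← mul_div_assoc, ENNReal.div_mul_cancel hu0 ENNReal.ofReal_ne_top,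
          ENNReal.mul_div_cancel two_ne_zero ENNReal.ofNat_ne_top]
    _ ≤ 2 * ∫⁻ t in Ioo (u / 2) u, h t / ENNReal.ofReal t := by
        gcongr 2 * ?_
        refine setLIntegral_mono' measurableSet_Ioo fun t ht => ?_
        have ht0 : 0 < t := (half_pos hu.1).trans ht.1
        gcongr
        · exact h_anti ⟨ht0, ht.2.trans hu.2⟩ hu ht.2.le
        · exact ht.2.le

variable {X : Type*} [MeasurableSpace X] {μ : Measure X} {N : X → ℝ}

-- Average the antitone profile over `(N x / 2, N x)` and apply Tonelli.
lemma setLIntegral_comp_le_of_antitoneOn [SFinite μ] (hN : Measurable N) {h : ℝ → ℝ≥0∞}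
    (hh : Measurable h) {ρ : ℝ} (h_anti : AntitoneOn h (Ioo 0 ρ)) :
    ∫⁻ x in N ⁻¹' Ioo 0 ρ, h (N x) ∂μ ≤
      2 * ∫⁻ t in Ioo 0 ρ, h t / ENNReal.ofReal t * μ {x | N x < 2 * t} := by
  let F : X → ℝ → ℝ≥0∞ := fun x => {t | N x < 2 * t}.indicator fun t => h t / ENNReal.ofReal t
  have hF : Measurable (Function.uncurry F) :=
    ((hh.comp measurable_snd).div measurable_snd.ennreal_ofReal).indicator
      (measurableSet_lt (hN.comp measurable_fst) (measurable_snd.const_mul 2))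
  have h_ball : ∀ t, MeasurableSet {x | N x < 2 * t} := fun t =>
    measurableSet_lt hN measurable_const
  have h_radii : ∀ x, MeasurableSet {t | N x < 2 * t} := fun x =>
    measurableSet_lt measurable_const (measurable_id.const_mul 2)
  calc ∫⁻ x in N ⁻¹' Ioo 0 ρ, h (N x) ∂μ
      ≤ ∫⁻ x in N ⁻¹' Ioo 0 ρ, (2 * ∫⁻ t in Ioo 0 ρ, F x t) ∂μ := by
        refine setLIntegral_mono' (hN measurableSet_Ioo) fun x hx => ?_
        refine (le_two_mul_setLIntegral_div_of_antitoneOn h_anti hx).trans ?_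
        gcongr 2 * ?_
        simp only [F, setLIntegral_indicator (h_radii x)]
        exact lintegral_mono_set fun t ht =>
          ⟨(div_lt_iff₀' two_pos).1 ht.1, (half_pos hx.1).trans ht.1, ht.2.trans hx.2⟩
    _ = 2 * ∫⁻ t in Ioo 0 ρ, (∫⁻ x in N ⁻¹' Ioo 0 ρ, F x t ∂μ) := by
        rw [lintegral_const_mul' _ _ ENNReal.ofNat_ne_top, lintegral_lintegral_swap hF.aemeasurable]
    _ ≤ 2 * ∫⁻ t in Ioo 0 ρ, h t / ENNReal.ofReal t * μ {x | N x < 2 * t} := by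
        gcongr with t
        exact (setLIntegral_le_lintegral _ _).trans_eq
          (lintegral_indicator_const (h_ball t) (h t / ENNReal.ofReal t))

variable {K : ℝ≥0} {d : ℝ}

lemma ae_pos_of_measure_lt_le (hd : 0 < d)
    (hμ : ∀ s > 0, μ {x | N x < s} ≤ K * ENNReal.ofReal (s ^ d)) : ∀ᵐ x ∂μ, 0 < N x := by
  have h_lim : Tendsto (fun s : ℝ => K * ENNReal.ofReal (s ^ d)) (𝓝[>] 0) (𝓝 0) := by
    have h_rpow := ((continuousAt_rpow_const 0 d (Or.inr hd.le)).tendsto).mono_left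
      (nhdsWithin_le_nhds (s := Ioi 0))
    simpa [zero_rpow hd.ne'] using
      ENNReal.Tendsto.const_mul (ENNReal.tendsto_ofReal h_rpow) (Or.inr ENNReal.coe_ne_top)
  rw [ae_iff, ← nonpos_iff_eq_zero]
  refine ge_of_tendsto h_lim (eventually_mem_nhdsWithin.mono fun s hs => ?_)
  exact (measure_mono fun x hx => (not_lt.1 hx).trans_lt hs).trans (hμ s hs)

lemma setLIntegral_logPole_le [SFinite μ] (hN : Measurable N) (hd : 0 < d)
    (hμ : ∀ s > 0, μ {x | N x < s} ≤ K * ENNReal.ofReal (s ^ d)) {p ρ : ℝ} (hp : 1 < p)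
    (hρ0 : 0 ≤ ρ) (hρ : ρ ≤ exp (-(p / d))) :
    ∫⁻ x in N ⁻¹' Ioo 0 ρ, ENNReal.ofReal (logPole d p (N x)) ∂μ ≤
      K * ENNReal.ofReal (2 ^ (d + 1) / (p - 1) * (-log ρ) ^ (1 - p)) := by
  have hp0 : 0 < p := one_pos.trans hp
  have hρ1 : ρ < 1 := hρ.trans_lt (exp_lt_one_iff.2 (neg_neg_of_pos (div_pos hp0 hd)))
  have h_anti : AntitoneOn (fun t => ENNReal.ofReal (logPole d p t)) (Ioo 0 ρ) :=
    ENNReal.ofReal_mono.comp_antitoneOn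
      ((antitoneOn_logPole hd hp0).mono fun t ht => ⟨ht.1, ht.2.le.trans hρ⟩)
  have h_shell : ∀ t ∈ Ioo 0 ρ,
      ENNReal.ofReal (logPole d p t) / ENNReal.ofReal t * μ {x | N x < 2 * t} ≤
        K * ENNReal.ofReal (2 ^ d) * ENNReal.ofReal (t⁻¹ * (-log t) ^ (-p)) := by
    intro t ht
    have ht0 : 0 < t := ht.1
    have hlog := neg_log_pos_of_mem_Ioc hρ1 (Ioo_subset_Ioc_self ht)
    have h_eq : logPole d p t / t * (2 * t) ^ d = 2 ^ d * (t⁻¹ * (-log t) ^ (-p)) := by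
      rw [logPole, abs_of_neg (neg_pos.1 hlog), mul_rpow two_pos.le ht0.le, rpow_neg hlog.le]
      field_simp
    calc _ ≤ ENNReal.ofReal (logPole d p t) / ENNReal.ofReal t *
          (K * ENNReal.ofReal ((2 * t) ^ d)) := by
          gcongr
          exact hμ _ (by positivity)
      _ = _ := by
          rw [← ENNReal.ofReal_div_of_pos ht0, mul_left_comm, ← ENNReal.ofReal_mul
            (div_nonneg (logPole_nonneg d p ht0.le) ht0.le), h_eq,
            ENNReal.ofReal_mul (by positivity), mul_assoc]
  calc ∫⁻ x in N ⁻¹' Ioo 0 ρ, ENNReal.ofReal (logPole d p (N x)) ∂μ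
      ≤ 2 * ∫⁻ t in Ioo 0 ρ,
          ENNReal.ofReal (logPole d p t) / ENNReal.ofReal t * μ {x | N x < 2 * t} :=
        setLIntegral_comp_le_of_antitoneOn hN (measurable_logPole d p).ennreal_ofReal h_anti
    _ ≤ 2 * ∫⁻ t in Ioo 0 ρ,
          K * ENNReal.ofReal (2 ^ d) * ENNReal.ofReal (t⁻¹ * (-log t) ^ (-p)) := by
        gcongr 2 * ?_
        exact setLIntegral_mono' measurableSet_Ioo h_shell
    _ = K * ENNReal.ofReal (2 ^ (d + 1) / (p - 1) * (-log ρ) ^ (1 - p)) := by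
        rw [lintegral_const_mul' _ _ (ENNReal.mul_ne_top ENNReal.coe_ne_top ENNReal.ofReal_ne_top),
          setLIntegral_congr Ioo_ae_eq_Ioc, setLIntegral_inv_mul_neg_log_rpow hp hρ0 hρ1,
          mul_assoc, ← ENNReal.ofReal_mul (by positivity), mul_left_comm,
          ← ENNReal.ofReal_ofNat 2, ← ENNReal.ofReal_mul zero_le_two, rpow_add_one two_ne_zero]
        congr 2
        ring

end RadialIntegral

section StummelModulus

variable {G : Type*} [MeasurableSpace G] [AddGroup G] {μ : Measure G} {N f : G → ℝ} {e : ℝ}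

/-- The Stummel modulus `ρ ↦ sup_x ∫_{N (x - y) < ρ} f y / N (x - y) ^ e dμ y` of `f` with respect
to a gauge `N`. As in `etaEx`, the supremum and the integral are real-valued, so that they have
their intended meaning only for integrable integrands and bounded families. -/
noncomputable def stummelModulus (μ : Measure G) (N f : G → ℝ) (e ρ : ℝ) : ℝ :=
  ⨆ x, ∫ y in {y | N (x - y) < ρ}, f y / N (x - y) ^ e ∂μ

lemma stummelModulus_nonneg (hN0 : ∀ x, 0 ≤ N x) (hf0 : ∀ x, 0 ≤ f x) (ρ : ℝ) :
    0 ≤ stummelModulus μ N f e ρ :=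
  Real.iSup_nonneg fun x => integral_nonneg fun y =>
    div_nonneg (hf0 y) (rpow_nonneg (hN0 (x - y)) e)

variable [MeasurableAdd G] [MeasurableNeg G]

lemma measurable_stummel_integrand (hN : Measurable N) (hf : Measurable f) (x : G) :
    Measurable fun y => f y / N (x - y) ^ e :=
  hf.div ((hN.comp (measurable_id.const_sub x)).pow_const e)

lemma integrableOn_stummel_integrand (hN : Measurable N) (hf : Measurable f) (hN0 : ∀ x, 0 ≤ N x)
    (hf0 : ∀ x, 0 ≤ f x) {M ρ : ℝ} {x : G}
    (h : ∫⁻ y in {y | N (x - y) < ρ}, ENNReal.ofReal (f y / N (x - y) ^ e) ∂μ ≤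
      ENNReal.ofReal M) :
    IntegrableOn (fun y => f y / N (x - y) ^ e) {y | N (x - y) < ρ} μ := by
  refine ⟨(measurable_stummel_integrand hN hf x).aestronglyMeasurable, ?_⟩
  rw [hasFiniteIntegral_iff_ofReal (ae_of_all _ fun y =>
    div_nonneg (hf0 y) (rpow_nonneg (hN0 (x - y)) e))]
  exact h.trans_lt ENNReal.ofReal_lt_top

lemma setIntegral_stummel_integrand_le (hN : Measurable N) (hf : Measurable f)
    (hN0 : ∀ x, 0 ≤ N x) (hf0 : ∀ x, 0 ≤ f x) {M ρ : ℝ} (hM : 0 ≤ M) {x : G}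
    (h : ∫⁻ y in {y | N (x - y) < ρ}, ENNReal.ofReal (f y / N (x - y) ^ e) ∂μ ≤
      ENNReal.ofReal M) :
    ∫ y in {y | N (x - y) < ρ}, f y / N (x - y) ^ e ∂μ ≤ M := by
  rw [integral_eq_lintegral_of_nonneg_ae
    (ae_of_all _ fun y => div_nonneg (hf0 y) (rpow_nonneg (hN0 (x - y)) e))
    (measurable_stummel_integrand hN hf x).aestronglyMeasurable]
  exact ENNReal.toReal_le_of_le_ofReal hM h

lemma stummelModulus_le (hN : Measurable N) (hf : Measurable f) (hN0 : ∀ x, 0 ≤ N x)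
    (hf0 : ∀ x, 0 ≤ f x) {M ρ : ℝ} (hM : 0 ≤ M)
    (h : ∀ x, ∫⁻ y in {y | N (x - y) < ρ}, ENNReal.ofReal (f y / N (x - y) ^ e) ∂μ ≤
      ENNReal.ofReal M) :
    stummelModulus μ N f e ρ ≤ M :=
  ciSup_le fun x => setIntegral_stummel_integrand_le hN hf hN0 hf0 hM (h x)

lemma stummelModulus_le_stummelModulus (hN : Measurable N) (hf : Measurable f)
    (hN0 : ∀ x, 0 ≤ N x) (hf0 : ∀ x, 0 ≤ f x) {M ρ σ : ℝ} (hρσ : ρ ≤ σ) (hM : 0 ≤ M)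
    (h : ∀ x, ∫⁻ y in {y | N (x - y) < σ}, ENNReal.ofReal (f y / N (x - y) ^ e) ∂μ ≤
      ENNReal.ofReal M) :
    stummelModulus μ N f e ρ ≤ stummelModulus μ N f e σ := by
  have h_bdd : BddAbove (range fun x => ∫ y in {y | N (x - y) < σ}, f y / N (x - y) ^ e ∂μ) :=
    ⟨M, forall_mem_range.2 fun x => setIntegral_stummel_integrand_le hN hf hN0 hf0 hM (h x)⟩
  exact ciSup_mono h_bdd fun x =>
    setIntegral_mono_set (integrableOn_stummel_integrand hN hf hN0 hf0 (h x))
      (ae_of_all _ fun y => div_nonneg (hf0 y) (rpow_nonneg (hN0 (x - y)) e))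
      (ae_of_all _ fun _ hy => lt_of_lt_of_le hy hρσ)

end StummelModulus

section CutoffLogPole

variable {G : Type*} {N : G → ℝ}

/-- The function `logPole a p ∘ N` cut off to the ball `{N < δ}`, of which `fex` is the instance
`N = betaDist n β`. -/
noncomputable def cutoffLogPole (N : G → ℝ) (a p δ : ℝ) : G → ℝ :=
  {y | N y < δ}.indicator fun y => logPole a p (N y)

lemma cutoffLogPole_nonneg (hN0 : ∀ x, 0 ≤ N x) (a p δ : ℝ) (y : G) :
    0 ≤ cutoffLogPole N a p δ y :=
  indicator_nonneg (fun y _ => logPole_nonneg a p (hN0 y)) y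

lemma cutoffLogPole_div_rpow_le [AddGroup G] {a d p δ ρ : ℝ} (ha : 0 < a) (had : a ≤ d) (hp : 0 < p)
    (hδ : δ ≤ exp (-(p / a))) {x y : G} (hy : 0 < N y) (hxy : N (x - y) ∈ Ioo 0 ρ) :
    ENNReal.ofReal (cutoffLogPole N a p δ y / N (x - y) ^ (d - a)) ≤
      (N ⁻¹' Ioo 0 ρ).indicator (fun z => ENNReal.ofReal (logPole d p (N z))) (x - y) +
        (N ⁻¹' Ioo 0 ρ).indicator (fun z => ENNReal.ofReal (logPole d p (N z))) y := by
  by_cases hyδ : N y < δ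
  · have h_min := ENNReal.ofReal_le_ofReal
      (logPole_div_rpow_le_logPole_min ha had hp hxy.1 ⟨hy, hyδ.le.trans hδ⟩)
    rw [cutoffLogPole, indicator_of_mem (s := {y | N y < δ}) hyδ]
    refine h_min.trans ?_
    rcases le_or_gt (N (x - y)) (N y) with hle | hlt
    · rw [min_eq_left hle, indicator_of_mem (s := N ⁻¹' Ioo 0 ρ) hxy]
      exact le_self_add
    · have hy_mem : y ∈ N ⁻¹' Ioo 0 ρ := ⟨hy, hlt.trans hxy.2⟩
      rw [min_eq_right hlt.le, indicator_of_mem hy_mem]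
      exact le_add_self
  · rw [cutoffLogPole, indicator_of_notMem (s := {y | N y < δ}) hyδ, zero_div, ENNReal.ofReal_zero]
    exact zero_le

variable [MeasurableSpace G]

lemma measurable_cutoffLogPole (hN : Measurable N) (a p δ : ℝ) :
    Measurable (cutoffLogPole N a p δ) :=
  ((measurable_logPole a p).comp hN).indicator (measurableSet_lt hN measurable_const)

variable [AddGroup G] [MeasurableAdd G] [MeasurableNeg G] {μ : Measure G} [μ.IsAddLeftInvariant]
  [μ.IsNegInvariant]

lemma setLIntegral_cutoffLogPole_div_rpow_le_two_mul (hN : Measurable N)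
    (hN_pos : ∀ᵐ y ∂μ, 0 < N y) {a d p δ ρ : ℝ} (ha : 0 < a) (had : a ≤ d) (hp : 0 < p)
    (hδ : δ ≤ exp (-(p / a))) (x : G) :
    ∫⁻ y in {y | N (x - y) < ρ},
        ENNReal.ofReal (cutoffLogPole N a p δ y / N (x - y) ^ (d - a)) ∂μ ≤
      2 * ∫⁻ y in N ⁻¹' Ioo 0 ρ, ENNReal.ofReal (logPole d p (N y)) ∂μ := by
  let P : G → ℝ≥0∞ := (N ⁻¹' Ioo 0 ρ).indicator fun z => ENNReal.ofReal (logPole d p (N z))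
  have h_sub := Measure.measurePreserving_sub_left μ x
  have hP : Measurable P :=
    ((measurable_logPole d p).comp hN).ennreal_ofReal.indicator (hN measurableSet_Ioo)
  have h_sub_pos : ∀ᵐ y ∂μ, 0 < N (x - y) := h_sub.quasiMeasurePreserving.ae hN_pos
  calc ∫⁻ y in {y | N (x - y) < ρ},
        ENNReal.ofReal (cutoffLogPole N a p δ y / N (x - y) ^ (d - a)) ∂μ
      ≤ ∫⁻ y in {y | N (x - y) < ρ}, P (x - y) + P y ∂μ := by
        refine setLIntegral_mono_ae'
          (measurableSet_lt (hN.comp h_sub.measurable) measurable_const) ?_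
        filter_upwards [hN_pos, h_sub_pos] with y hy hxy hyρ
        exact cutoffLogPole_div_rpow_le ha had hp hδ hy ⟨hxy, hyρ⟩
    _ ≤ ∫⁻ y, P (x - y) + P y ∂μ := setLIntegral_le_lintegral _ _
    _ = 2 * ∫⁻ y, P y ∂μ := by
        rw [lintegral_add_right _ hP, lintegral_sub_left_eq_self, two_mul]
    _ = 2 * ∫⁻ y in N ⁻¹' Ioo 0 ρ, ENNReal.ofReal (logPole d p (N y)) ∂μ := by
        rw [lintegral_indicator (hN measurableSet_Ioo)]

theorem setLIntegral_cutoffLogPole_div_rpow_le [SFinite μ] {K : ℝ≥0} {a d p δ ρ : ℝ}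
    (hN : Measurable N) (hμ : ∀ s > 0, μ {x | N x < s} ≤ K * ENNReal.ofReal (s ^ d))
    (ha : 0 < a) (had : a ≤ d) (hp : 1 < p) (hδ : δ ≤ exp (-(p / a))) (hρ0 : 0 ≤ ρ)
    (hρ : ρ ≤ exp (-(p / d))) (x : G) :
    ∫⁻ y in {y | N (x - y) < ρ},
        ENNReal.ofReal (cutoffLogPole N a p δ y / N (x - y) ^ (d - a)) ∂μ ≤
      ENNReal.ofReal (K * 2 ^ (d + 2) / (p - 1) * (-log ρ) ^ (1 - p)) := by
  have hd : 0 < d := ha.trans_le had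
  calc _ ≤ 2 * ∫⁻ y in N ⁻¹' Ioo 0 ρ, ENNReal.ofReal (logPole d p (N y)) ∂μ :=
        setLIntegral_cutoffLogPole_div_rpow_le_two_mul hN (ae_pos_of_measure_lt_le hd hμ) ha had
          (one_pos.trans hp) hδ x
    _ ≤ 2 * (K * ENNReal.ofReal (2 ^ (d + 1) / (p - 1) * (-log ρ) ^ (1 - p))) := by
        gcongr
        exact setLIntegral_logPole_le hN hd hμ hp hρ0 hρ
    _ = ENNReal.ofReal (K * 2 ^ (d + 2) / (p - 1) * (-log ρ) ^ (1 - p)) := by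
        rw [← ENNReal.ofReal_coe_nnreal, ← ENNReal.ofReal_ofNat 2,
          ← ENNReal.ofReal_mul K.coe_nonneg, ← ENNReal.ofReal_mul zero_le_two,
          show d + 2 = d + 1 + 1 by ring, rpow_add_one two_ne_zero (d + 1)]
        congr 1
        ring

end CutoffLogPole

section BetaDist

variable {n : ℕ} {β : Fin n → ℝ}

lemma betaDist_nonneg (x : Fin n → ℝ) : 0 ≤ betaDist n β x := by
  unfold betaDist
  positivity

lemma measurable_betaDist : Measurable (betaDist n β) := by
  unfold betaDist
  fun_prop

lemma abs_lt_rpow_of_betaDist_lt (hβ : ∀ k, 0 < β k) {s : ℝ} {x : Fin n → ℝ}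
    (hx : betaDist n β x < s) (k : Fin n) : |x k| < s ^ (n * β k / ∑ j, β j) := by
  have hn0 : (0 : ℝ) < n := Nat.cast_pos.2 k.pos
  have hk := hβ k
  have hS : 0 < ∑ j, β j := Finset.sum_pos (fun j _ => hβ j) ⟨k, Finset.mem_univ k⟩
  have h_single : |x k| ^ (1 / β k) ≤ ∑ j, |x j| ^ (1 / β j) :=
    Finset.single_le_sum (f := fun j => |x j| ^ (1 / β j)) (fun _ _ => by positivity)
      (Finset.mem_univ k)
  calc |x k| = ((|x k| ^ (1 / β k)) ^ ((∑ j, β j) / n)) ^ (n * β k / ∑ j, β j) := by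
        rw [← rpow_mul (abs_nonneg _), ← rpow_mul (abs_nonneg _)]
        convert (rpow_one |x k|).symm using 2
        field_simp
    _ ≤ betaDist n β x ^ (n * β k / ∑ j, β j) := by
        unfold betaDist
        gcongr
    _ < s ^ (n * β k / ∑ j, β j) := rpow_lt_rpow (betaDist_nonneg x) hx (by positivity)

lemma volume_betaDist_lt_le [NeZero n] (hβ : ∀ k, 0 < β k) {s : ℝ} (hs : 0 < s) :
    volume {x | betaDist n β x < s} ≤ ENNReal.ofReal ((2 * s) ^ n) := by
  have hS : 0 < ∑ j, β j := Finset.sum_pos (fun j _ => hβ j) Finset.univ_nonempty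
  have h_box : {x | betaDist n β x < s} ⊆ univ.pi fun k =>
      Ioo (-s ^ (n * β k / ∑ j, β j)) (s ^ (n * β k / ∑ j, β j)) := fun x hx k _ =>
    abs_lt.1 (abs_lt_rpow_of_betaDist_lt hβ hx k)
  have h_prod : ∏ k, 2 * s ^ (n * β k / ∑ j, β j) = (2 * s) ^ n := by
    rw [Finset.prod_mul_distrib, ← rpow_sum_of_pos hs, ← Finset.sum_div, ← Finset.mul_sum,
      mul_div_cancel_right₀ _ hS.ne', rpow_natCast, Finset.prod_const, Finset.card_univ,
      Fintype.card_fin, mul_pow]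
  calc volume {x | betaDist n β x < s}
      ≤ volume (univ.pi fun k =>
          Ioo (-s ^ (n * β k / ∑ j, β j)) (s ^ (n * β k / ∑ j, β j))) := measure_mono h_box
    _ = ∏ k, ENNReal.ofReal (2 * s ^ (n * β k / ∑ j, β j)) := by
        simp only [volume_pi_pi, volume_Ioo, sub_neg_eq_add, two_mul]
    _ = ENNReal.ofReal ((2 * s) ^ n) := by
        rw [← ENNReal.ofReal_prod_of_nonneg fun _ _ => by positivity, h_prod]

end BetaDist

section EtaEx

variable {n : ℕ} {β : Fin n → ℝ}

lemma fex_eq_cutoffLogPole : fex n β = cutoffLogPole (betaDist n β) 2 6 (exp (-3)) := rfl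

lemma etaEx_eq_stummelModulus :
    etaEx n β = stummelModulus volume (betaDist n β) (fex n β) (n - 2) := rfl

lemma fex_nonneg (x : Fin n → ℝ) : 0 ≤ fex n β x :=
  fex_eq_cutoffLogPole ▸ cutoffLogPole_nonneg betaDist_nonneg 2 6 (exp (-3)) x

lemma measurable_fex : Measurable (fex n β) :=
  fex_eq_cutoffLogPole ▸ measurable_cutoffLogPole measurable_betaDist 2 6 (exp (-3))

lemma etaEx_nonneg (ρ : ℝ) : 0 ≤ etaEx n β ρ :=
  etaEx_eq_stummelModulus ▸ stummelModulus_nonneg betaDist_nonneg fex_nonneg ρ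

lemma setLIntegral_fex_div_rpow_le (hn : 2 ≤ n) (hβ : ∀ k, 0 < β k) {ρ : ℝ} (hρ0 : 0 ≤ ρ)
    (hρ : ρ ≤ exp (-3)) (x : Fin n → ℝ) :
    ∫⁻ y in {y | betaDist n β (x - y) < ρ},
        ENNReal.ofReal (fex n β y / betaDist n β (x - y) ^ ((n : ℝ) - 2)) ≤
      ENNReal.ofReal (4 ^ (n + 1) / 5 * (-log ρ) ^ (-5 : ℝ)) := by
  have : NeZero n := ⟨by omega⟩
  have hn2 : (2 : ℝ) ≤ n := by exact_mod_cast hn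
  have h_ball : ∀ s > 0, volume {x | betaDist n β x < s} ≤
      ((2 ^ n : ℝ≥0) : ℝ≥0∞) * ENNReal.ofReal (s ^ (n : ℝ)) := fun s hs => by
    refine (volume_betaDist_lt_le hβ hs).trans_eq ?_
    rw [mul_pow, ENNReal.ofReal_mul (by positivity), rpow_natCast,
      ENNReal.ofReal_pow zero_le_two, ENNReal.ofReal_ofNat]
    norm_cast
  have h_radius : exp (-3) ≤ exp (-(6 / n)) := by
    rw [exp_le_exp, neg_le_neg_iff, div_le_iff₀ (by positivity)]
    linarith
  rw [fex_eq_cutoffLogPole]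
  refine (setLIntegral_cutoffLogPole_div_rpow_le (p := 6) measurable_betaDist h_ball two_pos hn2
    (by norm_num) (exp_le_exp.2 (by norm_num)) hρ0 (hρ.trans h_radius) x).trans_eq ?_
  have h_pow : ((2 ^ n : ℝ≥0) : ℝ) * 2 ^ ((n : ℝ) + 2) = 4 ^ (n + 1) := by
    rw [rpow_add two_pos, rpow_natCast, show (4 : ℝ) = 2 * 2 by norm_num, mul_pow, rpow_two]
    push_cast
    ring
  rw [h_pow]
  norm_num

lemma etaEx_bound_nonneg (n : ℕ) {ρ : ℝ} (hρ0 : 0 ≤ ρ) (hρ : ρ ≤ exp (-3)) :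
    0 ≤ 4 ^ (n + 1) / 5 * (-log ρ) ^ (-5 : ℝ) :=
  have hρ1 : ρ ≤ 1 := hρ.trans (exp_le_one_iff.2 (by norm_num))
  mul_nonneg (by positivity) (rpow_nonneg (neg_nonneg.2 (log_nonpos hρ0 hρ1)) _)

lemma etaEx_le (hn : 2 ≤ n) (hβ : ∀ k, 0 < β k) {ρ : ℝ} (hρ0 : 0 ≤ ρ) (hρ : ρ ≤ exp (-3)) :
    etaEx n β ρ ≤ 4 ^ (n + 1) / 5 * (-log ρ) ^ (-5 : ℝ) :=
  etaEx_eq_stummelModulus ▸ stummelModulus_le measurable_betaDist measurable_fex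
    betaDist_nonneg fex_nonneg (etaEx_bound_nonneg n hρ0 hρ)
    (setLIntegral_fex_div_rpow_le hn hβ hρ0 hρ)

lemma monotoneOn_etaEx (hn : 2 ≤ n) (hβ : ∀ k, 0 < β k) :
    MonotoneOn (etaEx n β) (Icc 0 (exp (-3))) := fun _ _ _ hσ hρσ =>
  etaEx_eq_stummelModulus ▸ stummelModulus_le_stummelModulus measurable_betaDist measurable_fex
    betaDist_nonneg fex_nonneg hρσ (etaEx_bound_nonneg n hσ.1 hσ.2)
    (setLIntegral_fex_div_rpow_le hn hβ hσ.1 hσ.2)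

end EtaEx

theorem example_function_dini_condition_general
    (n : ℕ) (hn : 2 ≤ n) (β : Fin n → ℝ) (hβ : ∀ k, 0 < β k) :
    ∃ C > 0, ∀ r : ℝ, 0 < r → r < exp (-3) →
      IntegrableOn (fun ρ => etaEx n β ρ ^ ((1 : ℝ) / 4) / ρ) (Ioc 0 r) ∧
      (∫ ρ in (0 : ℝ)..r, etaEx n β ρ ^ ((1 : ℝ) / 4) / ρ) ≤ C * (-log r) ^ (-(1 : ℝ) / 4) := by
  refine ⟨4 * (4 ^ (n + 1) / 5) ^ ((1 : ℝ) / 4), by positivity, fun r hr0 hr => ?_⟩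
  have h_sub : Ioc 0 r ⊆ Icc 0 (exp (-3)) := fun ρ hρ => ⟨hρ.1.le, hρ.2.trans hr.le⟩
  have h_meas : AEMeasurable (etaEx n β) (volume.restrict (Ioc 0 r)) :=
    aemeasurable_restrict_of_monotoneOn measurableSet_Ioc ((monotoneOn_etaEx hn hβ).mono h_sub)
  obtain ⟨h_int, h_le⟩ := integral_rpow_div_le_of_le_neg_log_rpow (b := 5) (θ := 1 / 4)
    (by positivity) (by norm_num) (by norm_num) hr0.le (hr.trans (exp_lt_one_iff.2 (by norm_num)))
    h_meas (fun ρ _ => etaEx_nonneg ρ)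
    (fun ρ hρ => etaEx_le hn hβ (h_sub hρ).1 (h_sub hρ).2)
  rw [intervalIntegral.integral_of_le hr0.le]
  refine ⟨h_int, h_le.trans_eq ?_⟩
  rw [show (1 : ℝ) - 5 * (1 / 4) = -1 / 4 by norm_num]
  ring

/-- for the example function, `∫₀^r η_β(ρ)^{1/4}/ρ dρ ≤ C (-log r)^{-1/4}`
for `r ∈ (0, e⁻³)`; in particular this integral is finite. -/
theorem example_function_dini_condition
    (n : ℕ) (hn : 3 ≤ n) (β : Fin n → ℝ) (hβ : ∀ k, (1:ℝ)/2 ≤ β k) :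
    ∃ C > 0, ∀ r : ℝ, 0 < r → r < Real.exp (-3) →
      IntegrableOn (fun ρ => etaEx n β ρ ^ ((1:ℝ)/4) / ρ) (Set.Ioc (0:ℝ) r) ∧
      (∫ ρ in (0:ℝ)..r, etaEx n β ρ ^ ((1:ℝ)/4) / ρ) ≤ C * (-Real.log r) ^ (-(1:ℝ)/4) :=
  example_function_dini_condition_general n (by omega) β fun k => one_half_pos.trans_le (hβ k)
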